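/- arXiv:math/9801066 — 2 statements merged into one kernel-verified Lean document; each statement's English description precedes it below -/
import Mathlib

section
/- For natural numbers a, b, c, the number of order ideals (lower sets) of the product of three chains Fin a × Fin b × Fin c (with the componentwise order) satisfies (number of lower sets of Fin a × Fin b × Fin c) · ∏_{i=0}^{a-1} ∏_{j=0}^{b-1} ∏_{k=0}^{c-1} (i+j+k+1) = ∏_{i=0}^{a-1} ∏_{j=0}^{b-1} ∏_{k=0}^{c-1} (i+j+k+2). -/
/-!
A lower set of `Fin a × Fin b × Fin c` is the region below an antitone array
`Fin a × Fin b → {0, …, c}`. Such an array is exactly the undetermined part of a Gelfand–Tsetlin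
pattern whose top row is `b` zeros followed by `a` copies of `c`: the interlacing inequalities
force all other entries to be `0` or `c`.

The number of Gelfand–Tsetlin patterns with top row `x` is `det (choose (x i + i) j)`. Indeed,
deleting the top row leaves a pattern whose top row `y` ranges over the product of the intervals
`[x i, x (i + 1)]`; since the determinant is multilinear in its rows, summing it over this product
sums each row separately, and by Pascal's rule the row sums telescope to differences of consecutive
rows of the next larger determinant. Up to a product of factorials this determinant is the
Vandermonde determinant of the numbers `x i + i`, so for the block row above everything but the
factors between the two blocks cancels.
-/

open Finset Matrix

section Determinants

theorem det_vandermonde_append {R : Type*} [CommRing R] {m n : ℕ} (u : Fin m → R) (w : Fin n → R) :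
    (vandermonde (Fin.append u w)).det =
      (vandermonde u).det * (vandermonde w).det * ∏ j, ∏ i, (w j - u i) := by
  have hlt (i : Fin m) (j : Fin n) : Fin.castAdd n i < Fin.natAdd m j := by
    rw [Fin.lt_def, Fin.val_castAdd, Fin.val_natAdd]
    omega
  simp only [det_vandermonde, ← filter_lt_eq_Ioi, prod_filter, Fin.prod_univ_add,
    Fin.append_left, Fin.append_right, hlt, (hlt _ _).not_gt, if_true, if_false, prod_const_one,
    prod_mul_distrib, (Fin.strictMono_castAdd n).lt_iff_lt,
    (Fin.strictMono_natAdd m).lt_iff_lt]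
  rw [prod_comm (f := fun i j => w j - u i)]
  ring

theorem sum_piFinset_det {R ι κ : Type*} [CommRing R] [Fintype ι] [DecidableEq ι]
    (s : ι → Finset κ) (f : ι → κ → ι → R) :
    ∑ y ∈ Fintype.piFinset s, (of fun i => f i (y i)).det =
      (of fun i j => ∑ t ∈ s i, f i t j).det := by
  have sum_row : (of fun i j => ∑ t ∈ s i, f i t j) = of fun i => ∑ t ∈ s i, f i t := by
    ext i j
    simp only [of_apply, Finset.sum_apply]
  rw [sum_row]
  exact (detRowAlternating.map_sum_finset f s).symm

theorem det_eq_det_row_sub_pred {R : Type*} [CommRing R] {n : ℕ}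
    {A : Matrix (Fin (n + 1)) (Fin (n + 1)) R} (h : ∀ i, A i 0 = 1) :
    A.det = (of fun i j : Fin n => A i.succ j.succ - A i.castSucc j.succ).det := by
  let B : Matrix (Fin (n + 1)) (Fin (n + 1)) R :=
    of (Fin.cons (A 0) fun i => A i.succ - A i.castSucc)
  have row_reduce : A.det = B.det :=
    det_eq_of_forall_row_eq_smul_add_pred (fun _ => 1) (fun j => by simp [B])
      (fun i j => by simp [B])
  rw [row_reduce, det_succ_column_zero, Fin.sum_univ_succ]
  simp [B, h, submatrix]

/-- The determinant of the binomial coefficients `choose (v i) j`. Up to a factor depending only on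
`n` it is the Vandermonde determinant of `v`; at `v i = x i + i` it counts the Gelfand–Tsetlin
patterns with top row `x`. -/
def binomDet {n : ℕ} (v : Fin n → ℕ) : ℤ :=
  (of fun i j : Fin n => ((v i).choose j : ℤ)).det

theorem det_vandermonde_natCast {n : ℕ} (v : Fin n → ℕ) :
    (vandermonde fun i => (v i : ℤ)).det = (∏ i : Fin n, ((i : ℕ).factorial : ℤ)) * binomDet v := by
  rw [det_eval_matrixOfPolynomials_eq_det_vandermonde _ (fun j => descPochhammer ℤ j)
      (fun j => descPochhammer_natDegree ℤ j) (fun j => monic_descPochhammer ℤ j),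
    binomDet, ← det_mul_row]
  congr 1
  ext i j
  simp only [of_apply, descPochhammer_eval_eq_descFactorial,
    Nat.descFactorial_eq_factorial_mul_choose, Nat.cast_mul]

theorem binomDet_val (n : ℕ) : binomDet (fun i : Fin n => (i : ℕ)) = 1 := by
  rw [binomDet, det_of_isLowerTriangular]
  · simp
  · intro i j (h : i < j)
    simp [Nat.choose_eq_zero_of_lt h]

theorem binomDet_mul_det_vandermonde_val {n : ℕ} (v : Fin n → ℕ) :
    binomDet v * (vandermonde fun i : Fin n => ((i : ℕ) : ℤ)).det =
      (vandermonde fun i => (v i : ℤ)).det := by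
  rw [det_vandermonde_natCast v, det_vandermonde_natCast fun i : Fin n => (i : ℕ), binomDet_val]
  ring

end Determinants

section Interlacing

/-- The vectors `y` interlacing with `x`, that is `x 0 ≤ y 0 ≤ x 1 ≤ y 1 ≤ ⋯`: the possible second
rows of a Gelfand–Tsetlin pattern with top row `x`. -/
def interlacing {α : Type*} [Preorder α] [LocallyFiniteOrder α] {n : ℕ} (x : Fin (n + 1) → α) :
    Finset (Fin n → α) :=
  Fintype.piFinset fun i => Icc (x i.castSucc) (x i.succ)

theorem monotone_of_mem_interlacing {α : Type*} [Preorder α] [LocallyFiniteOrder α] {n : ℕ}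
    {x : Fin (n + 1) → α} {y : Fin n → α} (hx : Monotone x) (hy : y ∈ interlacing x) :
    Monotone y := by
  simp only [interlacing, Fintype.mem_piFinset, mem_Icc] at hy
  refine monotone_iff_forall_lt.2 fun i j hij => ?_
  calc y i ≤ x i.succ := (hy i).2
    _ ≤ x j.castSucc := hx (Fin.succ_le_castSucc_iff.2 hij)
    _ ≤ y j := (hy j).1

theorem sum_Icc_choose_add {l u : ℕ} (h : l ≤ u) (i j : ℕ) :
    ∑ y ∈ Icc l u, ((y + i).choose j : ℤ) =
      (u + (i + 1)).choose (j + 1) - (l + i).choose (j + 1) := by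
  have pascal (y : ℕ) : ((y + i).choose j : ℤ) =
      (y + 1 + i).choose (j + 1) - (y + i).choose (j + 1) := by
    rw [add_right_comm, Nat.choose_succ_succ]
    push_cast
    ring
  rw [← Ico_add_one_right_eq_Icc, sum_congr rfl fun y _ => pascal y,
    sum_Ico_sub (fun y => ((y + i).choose (j + 1) : ℤ)) (by omega), add_right_comm u, add_assoc]

theorem binomDet_add_val_eq_sum_interlacing {n : ℕ} {x : Fin (n + 1) → ℕ} (hx : Monotone x) :
    binomDet (fun i => x i + i) = ∑ y ∈ interlacing x, binomDet fun i => y i + i := by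
  rw [binomDet, det_eq_det_row_sub_pred fun i => by simp]
  refine Eq.trans ?_
    (sum_piFinset_det _ fun (i : Fin n) (t : ℕ) (j : Fin n) => ((t + i).choose j : ℤ)).symm
  congr 1
  ext i j
  simpa using (sum_Icc_choose_add (hx i.castSucc_le_succ) i j).symm

end Interlacing

/-- Gelfand–Tsetlin patterns with top row `x`: the row `T k`, for `k ≤ n`, has the `k` entries
`T k 0, …, T k (k - 1)`, and consecutive rows interlace. Rows are weakly increasing, the reverse of
the usual convention, and entries outside the triangle are `0`, so that a pattern is determined by
its entries inside it. -/
structure IsGelfandTsetlin (n : ℕ) (x : Fin n → ℕ) (T : ℕ → ℕ → ℕ) : Prop where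
  eq_zero : ∀ k i, n < k ∨ k ≤ i → T k i = 0
  top_row : ∀ i : Fin n, T n i = x i
  interlace : ∀ k i, i < k → k < n → T (k + 1) i ≤ T k i ∧ T k i ≤ T (k + 1) (i + 1)

namespace IsGelfandTsetlin

section Peel

variable {n : ℕ} {x : Fin (n + 1) → ℕ} {y : Fin n → ℕ} {T : ℕ → ℕ → ℕ}

theorem row_mem_interlacing (h : IsGelfandTsetlin (n + 1) x T) :
    (fun i : Fin n => T n i) ∈ interlacing x := by
  simp only [interlacing, Fintype.mem_piFinset, mem_Icc, ← h.top_row]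
  exact fun i => h.interlace n i i.2 n.lt_add_one

theorem erase_top_row (h : IsGelfandTsetlin (n + 1) x T) :
    IsGelfandTsetlin n (fun i => T n i) (Function.update T (n + 1) 0) where
  eq_zero k i hki := by
    rcases eq_or_ne k (n + 1) with rfl | hk
    · simp
    · rw [Function.update_of_ne hk]
      exact h.eq_zero k i (by omega)
  top_row i := by rw [Function.update_of_ne n.lt_add_one.ne]
  interlace k i hi hk := by
    rw [Function.update_of_ne (by omega), Function.update_of_ne (by omega)]
    exact h.interlace k i hi (by omega)

theorem add_top_row (hy : y ∈ interlacing x) (h : IsGelfandTsetlin n y T) :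
    IsGelfandTsetlin (n + 1) x (Function.update T (n + 1) (Function.extend Fin.val x 0)) where
  eq_zero k i hki := by
    rcases eq_or_ne k (n + 1) with rfl | hk
    · rw [Function.update_self, Function.extend_apply', Pi.zero_apply]
      rintro ⟨j, rfl⟩
      omega
    · rw [Function.update_of_ne hk]
      exact h.eq_zero k i (by omega)
  top_row i := by rw [Function.update_self, Fin.val_injective.extend_apply]
  interlace k i hi hk := by
    rw [Function.update_of_ne hk.ne]
    rcases (Nat.le_of_lt_succ hk).eq_or_lt with rfl | hkn
    · have hyi := mem_Icc.1 (Fintype.mem_piFinset.1 hy ⟨i, hi⟩)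
      rw [← h.top_row, ← Fin.val_injective.extend_apply x 0 (Fin.castSucc _),
        ← Fin.val_injective.extend_apply x 0 (Fin.succ _)] at hyi
      simpa using hyi
    · rw [Function.update_of_ne (by omega)]
      exact h.interlace k i hi hkn

variable (x) in
/-- A Gelfand–Tsetlin pattern amounts to its second row together with the pattern below its top
row; this is the recursion by which patterns are counted. -/
noncomputable def peelEquiv : {T // IsGelfandTsetlin (n + 1) x T} ≃
    Σ y : interlacing x, {T // IsGelfandTsetlin n y.1 T} where
  toFun T := ⟨⟨_, T.2.row_mem_interlacing⟩, ⟨_, T.2.erase_top_row⟩⟩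
  invFun p := ⟨_, p.2.2.add_top_row p.1.2⟩
  left_inv := by
    rintro ⟨T, hT⟩
    have top_eq : Function.extend Fin.val x 0 = T (n + 1) := by
      ext i
      by_cases hi : i < n + 1
      · exact (Fin.val_injective.extend_apply x 0 ⟨i, hi⟩).trans (hT.top_row ⟨i, hi⟩).symm
      · rw [Function.extend_apply' _ _ _ fun ⟨j, hj⟩ => hi (hj ▸ j.2), hT.eq_zero _ _ (by omega)]
        rfl
    simp [top_eq]
  right_inv := by
    rintro ⟨⟨y, hy⟩, T, hT⟩
    refine Sigma.subtype_ext (Subtype.ext (funext fun i => ?_)) ?_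
    · simpa using hT.top_row i
    · have top_eq : T (n + 1) = 0 := funext fun i => hT.eq_zero _ i (by omega)
      simp [← top_eq]

end Peel

instance uniqueZero (x : Fin 0 → ℕ) : Unique {T // IsGelfandTsetlin 0 x T} where
  default := ⟨0, by constructor <;> simp⟩
  uniq T := Subtype.ext <| funext₂ fun k i => T.2.eq_zero k i (by omega)

instance finite {n : ℕ} (x : Fin n → ℕ) : Finite {T // IsGelfandTsetlin n x T} := by
  induction n with
  | zero => infer_instance
  | succ n ih => exact Finite.of_equiv _ (peelEquiv x).symm

theorem card_eq_binomDet {n : ℕ} {x : Fin n → ℕ} (hx : Monotone x) :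
    (Nat.card {T // IsGelfandTsetlin n x T} : ℤ) = binomDet fun i => x i + i := by
  induction n with
  | zero => simp [binomDet]
  | succ n ih =>
    rw [Nat.card_congr (peelEquiv x), Nat.card_sigma, binomDet_add_val_eq_sum_interlacing hx,
      ← sum_coe_sort (interlacing x), Nat.cast_sum]
    exact sum_congr rfl fun y _ => ih (monotone_of_mem_interlacing hx y.2)

section Bounds

variable {n : ℕ} {x : Fin n → ℕ} {T : ℕ → ℕ → ℕ}

theorem apply_add_le (h : IsGelfandTsetlin n x T) {k i m : ℕ} (hi : i < k) (hk : k + m ≤ n) :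
    T (k + m) i ≤ T k i := by
  induction m with
  | zero => rfl
  | succ m ih => exact (h.interlace (k + m) i (by omega) (by omega)).1.trans (ih (by omega))

theorem apply_le_add_add (h : IsGelfandTsetlin n x T) {k i m : ℕ} (hi : i < k) (hk : k + m ≤ n) :
    T k i ≤ T (k + m) (i + m) := by
  induction m with
  | zero => rfl
  | succ m ih => exact (ih (by omega)).trans (h.interlace (k + m) (i + m) (by omega) (by omega)).2

theorem apply_mem_Icc (h : IsGelfandTsetlin n x T) {k i : ℕ} (hi : i < k) (hk : k ≤ n) :
    T k i ∈ Icc (x ⟨i, by omega⟩) (x ⟨i + (n - k), by omega⟩) := by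
  obtain ⟨m, rfl⟩ := Nat.exists_eq_add_of_le hk
  simp only [mem_Icc, ← h.top_row, Nat.add_sub_cancel_left]
  exact ⟨h.apply_add_le hi le_rfl, h.apply_le_add_add hi le_rfl⟩

end Bounds

end IsGelfandTsetlin

section BlockRow

/-- The top row `0, …, 0, c, …, c` with `b` zeros and `a` copies of `c`. Gelfand–Tsetlin patterns
with this top row correspond to antitone arrays `Fin a × Fin b → {0, …, c}`. -/
def blockRow (a b c : ℕ) : Fin (b + a) → ℕ :=
  Fin.append (fun _ => 0) (fun _ => c)

theorem blockRow_of_lt {a b c : ℕ} {i : Fin (b + a)} (hi : i < b) : blockRow a b c i = 0 :=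
  Fin.append_left _ _ (⟨i, hi⟩ : Fin b)

theorem blockRow_of_le {a b c : ℕ} {i : Fin (b + a)} (hi : b ≤ i) : blockRow a b c i = c := by
  obtain ⟨j, rfl⟩ : ∃ j, Fin.natAdd b j = i :=
    ⟨⟨i - b, by omega⟩, Fin.ext (Nat.add_sub_of_le hi)⟩
  exact Fin.append_right _ _ j

theorem blockRow_zero (a b : ℕ) : blockRow a b 0 = 0 := by
  ext i
  rcases lt_or_ge (i : ℕ) b with hi | hi
  · exact blockRow_of_lt hi
  · exact blockRow_of_le hi

theorem monotone_blockRow (a b c : ℕ) : Monotone (blockRow a b c) := by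
  intro i j hij
  rcases lt_or_ge (i : ℕ) b with hi | hi
  · rw [blockRow_of_lt hi]
    exact Nat.zero_le _
  · rw [blockRow_of_le hi, blockRow_of_le (hi.trans hij)]

theorem prod_prod_add_sub (a b m : ℕ) :
    ∏ i : Fin a, ∏ j : Fin b, (((b + m + i : ℕ) : ℤ) - (j : ℕ)) =
      ∏ i ∈ range a, ∏ j ∈ range b, ((i + j + m + 1 : ℕ) : ℤ) := by
  rw [← Fin.prod_univ_eq_prod_range (fun i => ∏ j ∈ range b, ((i + j + m + 1 : ℕ) : ℤ))]
  refine prod_congr rfl fun i _ => ?_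
  rw [← Fin.prod_univ_eq_prod_range (fun j => ((i + j + m + 1 : ℕ) : ℤ)),
    ← Equiv.prod_comp Fin.revPerm]
  refine prod_congr rfl fun j _ => ?_
  rw [Fin.revPerm_apply, Fin.val_rev]
  omega

theorem det_vandermonde_blockRow_add_val (a b c : ℕ) :
    (vandermonde fun i => ((blockRow a b c i + i : ℕ) : ℤ)).det =
      (vandermonde fun i : Fin b => ((i : ℕ) : ℤ)).det *
        (vandermonde fun i : Fin a => ((i : ℕ) : ℤ)).det *
        ∏ i ∈ range a, ∏ j ∈ range b, ((i + j + c + 1 : ℕ) : ℤ) := by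
  have split_row : (fun i => ((blockRow a b c i + i : ℕ) : ℤ)) =
      Fin.append (fun i : Fin b => ((i : ℕ) : ℤ)) fun i : Fin a => ((b + c + i : ℕ) : ℤ) := by
    ext i
    refine Fin.addCases (fun i => ?_) (fun i => ?_) i
    · simp [blockRow]
    · simp [blockRow, add_left_comm, add_assoc]
  have shift : (vandermonde fun i : Fin a => ((b + c + i : ℕ) : ℤ)).det =
      (vandermonde fun i : Fin a => ((i : ℕ) : ℤ)).det := by
    rw [← det_vandermonde_add (fun i : Fin a => ((i : ℕ) : ℤ)) (b + c : ℕ)]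
    simp only [Nat.cast_add, add_comm]
  rw [split_row, det_vandermonde_append, shift, prod_prod_add_sub]

theorem binomDet_blockRow_mul_prod (a b c : ℕ) :
    binomDet (fun i => blockRow a b c i + i) *
        ∏ i ∈ range a, ∏ j ∈ range b, ((i + j + 1 : ℕ) : ℤ) =
      ∏ i ∈ range a, ∏ j ∈ range b, ((i + j + c + 1 : ℕ) : ℤ) := by
  have weyl := binomDet_mul_det_vandermonde_val fun i => blockRow a b c i + i
  have det_val := det_vandermonde_blockRow_add_val a b 0
  simp only [blockRow_zero, Pi.zero_apply, zero_add, add_zero] at det_val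
  rw [det_val, det_vandermonde_blockRow_add_val] at weyl
  have det_ne_zero (n : ℕ) : (vandermonde fun i : Fin n => ((i : ℕ) : ℤ)).det ≠ 0 :=
    det_vandermonde_ne_zero_iff.2 (Nat.cast_injective.comp Fin.val_injective)
  apply mul_left_cancel₀ (mul_ne_zero (det_ne_zero b) (det_ne_zero a))
  linear_combination weyl

end BlockRow

section CornerBlock

/-- The `a × b` array of those entries of a Gelfand–Tsetlin pattern with top row `blockRow a b c`
that its top row leaves undetermined. The first coordinate runs through the columns `T · i` of the
pattern from `T (i + 1) i` on, the second through these columns from right to left, which makes the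
array antitone in both. -/
def cornerBlock (a b : ℕ) (T : ℕ → ℕ → ℕ) (p : Fin a × Fin b) : ℕ :=
  T (p.1 + p.2.rev + 1) p.2.rev

/-- The Gelfand–Tsetlin pattern with top row `blockRow a b c` whose undetermined entries are given
by `h`, inverse to `cornerBlock`. -/
def ofCornerBlock {a b : ℕ} (c : ℕ) (h : Fin a × Fin b → ℕ) (k i : ℕ) : ℕ :=
  if i < k ∧ k ≤ b + a then
    if hi : i < b then
      if hq : k - 1 - i < a then h (⟨k - 1 - i, hq⟩, (⟨i, hi⟩ : Fin b).rev) else 0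
    else c
  else 0

namespace IsGelfandTsetlin

variable {a b c : ℕ} {S T : ℕ → ℕ → ℕ}

theorem antitone_cornerBlock {x : Fin (b + a) → ℕ} (hT : IsGelfandTsetlin (b + a) x T) :
    Antitone (cornerBlock a b T) := by
  rintro ⟨q, p⟩ ⟨q', p'⟩ ⟨hq : q ≤ q', hp : p ≤ p'⟩
  rw [← Fin.rev_le_rev] at hp
  obtain ⟨m, hm⟩ := Nat.exists_eq_add_of_le (Fin.le_def.1 hq)
  obtain ⟨l, hl⟩ := Nat.exists_eq_add_of_le (Fin.le_def.1 hp)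
  calc T (q' + p'.rev + 1) p'.rev
      = T (q + p'.rev + 1 + m) p'.rev := by rw [hm]; congr 1; omega
    _ ≤ T (q + p'.rev + 1) p'.rev := hT.apply_add_le (by omega) (by omega)
    _ ≤ T (q + p'.rev + 1 + l) (p'.rev + l) := hT.apply_le_add_add (by omega) (by omega)
    _ = T (q + p.rev + 1) p.rev := by rw [hl]; congr 1; omega

theorem apply_eq_cap (hT : IsGelfandTsetlin (b + a) (blockRow a b c) T) {k i : ℕ}
    (hi : b ≤ i) (hik : i < k) (hk : k ≤ b + a) : T k i = c := by
  simpa [blockRow_of_le, hi, hi.trans (Nat.le_add_right _ _)] using hT.apply_mem_Icc hik hk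

theorem apply_eq_zero (hT : IsGelfandTsetlin (b + a) (blockRow a b c) T) {k i : ℕ}
    (hi : i + a < k) : T k i = 0 := by
  rcases lt_or_ge (b + a) k with hk | hk
  · exact hT.eq_zero k i (.inl hk)
  · have := (mem_Icc.1 (hT.apply_mem_Icc (i := i) (by omega) hk)).2
    rwa [blockRow_of_lt (by simp only; omega), Nat.le_zero] at this

theorem cornerBlock_le (hT : IsGelfandTsetlin (b + a) (blockRow a b c) T) (p : Fin a × Fin b) :
    cornerBlock a b T p ≤ c := by
  refine (mem_Icc.1 (hT.apply_mem_Icc (by omega) (by omega))).2.trans_eq ?_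
  exact blockRow_of_le (by simp only; omega)

theorem eq_of_cornerBlock_eq (hS : IsGelfandTsetlin (b + a) (blockRow a b c) S)
    (hT : IsGelfandTsetlin (b + a) (blockRow a b c) T)
    (h : cornerBlock a b S = cornerBlock a b T) : S = T := by
  ext k i
  rcases lt_or_ge (i + a) k with hq | hq
  · rw [hS.apply_eq_zero hq, hT.apply_eq_zero hq]
  by_cases hik : b + a < k ∨ k ≤ i
  · rw [hS.eq_zero k i hik, hT.eq_zero k i hik]
  push Not at hik
  rcases le_or_gt b i with hi | hi
  · rw [hS.apply_eq_cap hi hik.2 hik.1, hT.apply_eq_cap hi hik.2 hik.1]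
  · have := congrFun h (⟨k - 1 - i, by omega⟩, (⟨i, hi⟩ : Fin b).rev)
    simpa [cornerBlock, show k - 1 - i + i + 1 = k by omega] using this

end IsGelfandTsetlin

theorem cornerBlock_ofCornerBlock {a b c : ℕ} (h : Fin a × Fin b → ℕ) :
    cornerBlock a b (ofCornerBlock c h) = h := by
  ext ⟨q, p⟩
  have hik : (p.rev : ℕ) < (q : ℕ) + p.rev + 1 ∧ (q : ℕ) + p.rev + 1 ≤ b + a := by omega
  simp only [cornerBlock, ofCornerBlock, hik, and_self, if_true, Fin.is_lt, dif_pos,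
    Nat.add_sub_cancel, Fin.eta, Fin.rev_rev]

theorem isGelfandTsetlin_ofCornerBlock {a b c : ℕ} {h : Fin a × Fin b → ℕ} (anti : Antitone h)
    (le_cap : ∀ p, h p ≤ c) :
    IsGelfandTsetlin (b + a) (blockRow a b c) (ofCornerBlock c h) where
  eq_zero k i hki := if_neg (by omega)
  top_row i := by
    rcases lt_or_ge (i : ℕ) b with hi | hi
    · have hq : ¬ b + a - 1 - i < a := by omega
      simp [ofCornerBlock, blockRow_of_lt hi, hi, hq]
    · simp [ofCornerBlock, blockRow_of_le hi, hi.not_gt]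
  interlace k i hi hk := by
    unfold ofCornerBlock
    rw [if_pos (by omega), if_pos (by omega), if_pos (by omega)]
    constructor
    · split_ifs <;> first
        | omega
        | exact anti ⟨Fin.le_def.2 (by simp only; omega), le_rfl⟩
    · split_ifs <;> first
        | omega
        | exact le_cap _
        | exact anti ⟨Fin.le_def.2 (by simp only; omega),
            Fin.rev_le_rev.2 (Fin.le_def.2 i.le_succ)⟩

theorem card_gelfandTsetlin_blockRow (a b c : ℕ) :
    Nat.card {T // IsGelfandTsetlin (b + a) (blockRow a b c) T} =
      Nat.card {h : Fin a × Fin b → ℕ // Antitone h ∧ ∀ p, h p ≤ c} :=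
  Nat.card_congr
    { toFun T := ⟨cornerBlock a b T, T.2.antitone_cornerBlock, T.2.cornerBlock_le⟩
      invFun h := ⟨ofCornerBlock c h, isGelfandTsetlin_ofCornerBlock h.2.1 h.2.2⟩
      left_inv T := Subtype.ext <| IsGelfandTsetlin.eq_of_cornerBlock_eq
        (isGelfandTsetlin_ofCornerBlock T.2.antitone_cornerBlock T.2.cornerBlock_le) T.2
        (cornerBlock_ofCornerBlock _)
      right_inv _ := Subtype.ext (cornerBlock_ofCornerBlock _) }

end CornerBlock

section LowerSets

theorem exists_forall_mem_iff_val_lt {c : ℕ} {t : Set (Fin c)} (ht : IsLowerSet t) :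
    ∃ m ≤ c, ∀ k, k ∈ t ↔ (k : ℕ) < m := by
  rcases ht.eq_univ_or_Iio with rfl | ⟨m, rfl⟩
  · exact ⟨c, le_rfl, by simp⟩
  · exact ⟨m, m.2.le, fun _ => Iff.rfl⟩

theorem card_lowerSets_congr {α β : Type*} [Preorder α] [Preorder β] (e : α ≃o β) :
    Nat.card {s : Set α // IsLowerSet s} = Nat.card {s : Set β // IsLowerSet s} :=
  Nat.card_congr
    { toFun s := ⟨e.symm ⁻¹' s, s.2.preimage e.symm.monotone⟩
      invFun s := ⟨e ⁻¹' s, s.2.preimage e.monotone⟩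
      left_inv s := Subtype.ext (e.toEquiv.preimage_symm_preimage s.1)
      right_inv s := Subtype.ext (e.toEquiv.symm_preimage_preimage s.1) }

theorem card_lowerSets_prod_fin (α : Type*) [Preorder α] (c : ℕ) :
    Nat.card {s : Set (α × Fin c) // IsLowerSet s} =
      Nat.card {h : α → ℕ // Antitone h ∧ ∀ x, h x ≤ c} := by
  let subgraph (h : {h : α → ℕ // Antitone h ∧ ∀ x, h x ≤ c}) :
      {s : Set (α × Fin c) // IsLowerSet s} :=
    ⟨{z | (z.2 : ℕ) < h.1 z.1}, fun _ _ hwz hz =>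
      (Fin.le_def.1 hwz.2).trans_lt (hz.trans_le (h.2.1 hwz.1))⟩
  refine (Nat.card_eq_of_bijective subgraph ⟨?_, ?_⟩).symm
  · rintro ⟨f, hf, hfc⟩ ⟨g, hg, hgc⟩ hfg
    have same_lt (x : α) (k : Fin c) : (k : ℕ) < f x ↔ (k : ℕ) < g x :=
      Set.ext_iff.1 (congrArg Subtype.val hfg) (x, k)
    ext x
    refine eq_of_forall_lt_iff fun k => ?_
    rcases lt_or_ge k c with hk | hk
    · exact same_lt x ⟨k, hk⟩
    · simp [((hfc x).trans hk).not_gt, ((hgc x).trans hk).not_gt]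
  · rintro ⟨s, hs⟩
    have fiber (x : α) : IsLowerSet {k | (x, k) ∈ s} :=
      fun _ _ hkl hk => hs (Prod.mk_le_mk.2 ⟨le_rfl, hkl⟩) hk
    choose h h_le mem_iff using fun x => exists_forall_mem_iff_val_lt (fiber x)
    have anti : Antitone h := by
      intro x y hxy
      by_contra! hlt
      have hk : h x < c := hlt.trans_le (h_le y)
      have hy : (y, ⟨h x, hk⟩) ∈ s := (mem_iff y ⟨h x, hk⟩).2 hlt
      exact ((mem_iff x ⟨h x, hk⟩).1 (hs (Prod.mk_le_mk.2 ⟨hxy, le_rfl⟩) hy)).false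
    exact ⟨⟨h, anti, h_le⟩, Subtype.ext (Set.ext fun z => (mem_iff z.1 z.2).symm)⟩

end LowerSets

theorem card_lowerSets_box_mul_prod (a b c : ℕ) :
    Nat.card {s : Set (Fin a × Fin b × Fin c) // IsLowerSet s} *
        ∏ i ∈ range a, ∏ j ∈ range b, (i + j + 1) =
      ∏ i ∈ range a, ∏ j ∈ range b, (i + j + c + 1) := by
  rw [card_lowerSets_congr (OrderIso.prodAssoc (Fin a) (Fin b) (Fin c)).symm,
    card_lowerSets_prod_fin, ← card_gelfandTsetlin_blockRow]
  zify
  rw [IsGelfandTsetlin.card_eq_binomDet (monotone_blockRow a b c)]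
  exact_mod_cast binomDet_blockRow_mul_prod a b c

theorem prod_boxes_mul_prod (a b c : ℕ) :
    (∏ i ∈ range a, ∏ j ∈ range b, ∏ k ∈ range c, (i + j + k + 2)) *
        ∏ i ∈ range a, ∏ j ∈ range b, (i + j + 1) =
      (∏ i ∈ range a, ∏ j ∈ range b, ∏ k ∈ range c, (i + j + k + 1)) *
        ∏ i ∈ range a, ∏ j ∈ range b, (i + j + c + 1) := by
  simp only [← prod_mul_distrib]
  refine prod_congr rfl fun i _ => prod_congr rfl fun j _ => ?_
  exact (prod_range_succ' (fun k => i + j + k + 1) c).symm.trans (prod_range_succ _ _)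

/-- The number of order ideals (lower sets) of the product of three chains
`Fin a × Fin b × Fin c` (componentwise order) is given multiplicatively by
MacMahon's product formula. -/
theorem card_lowerSets_box (a b c : ℕ) :
    Nat.card {s : Set (Fin a × Fin b × Fin c) // IsLowerSet s} *
      (∏ i ∈ Finset.range a, ∏ j ∈ Finset.range b, ∏ k ∈ Finset.range c,
        (i + j + k + 1)) =
    ∏ i ∈ Finset.range a, ∏ j ∈ Finset.range b, ∏ k ∈ Finset.range c,
      (i + j + k + 2) := by
  have base_pos : 0 < ∏ i ∈ range a, ∏ j ∈ range b, (i + j + 1) :=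
    prod_pos fun i _ => prod_pos fun j _ => Nat.succ_pos _
  apply Nat.eq_of_mul_eq_mul_right base_pos
  rw [mul_right_comm, card_lowerSets_box_mul_prod, prod_boxes_mul_prod, mul_comm]
end

section
/- Let P be a finite partially ordered set and let L be a finite list of pairs (x, b) with x ∈ P and b a Boolean. Let F be the composite map on lower sets of P obtained by applying the single-site updates up(·, x, b) in the order given by L. If F(∅) = F(P) (the composite sends the empty lower set and the full lower set P to the same lower set), then F(I) = F(∅) for every lower set I of P. -/
attribute [local instance] Classical.propDecidable

/-- The single-site update of the Monte Carlo algorithm. -/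
noncomputable def up {P : Type*} [PartialOrder P] (I : Set P) (x : P) (b : Bool) : Set P :=
  if b then (if IsLowerSet (I ∪ {x}) then I ∪ {x} else I)
  else (if IsLowerSet (I \ {x}) then I \ {x} else I)

/-!
Membership in the updated set is a positive condition on the lower set `I`: after a toss `true`,
a site `x` outside `I` is added iff `Iio x ⊆ I`; after a toss `false`, a site `x` in `I` is kept iff
`I` has an element strictly above `x`. Hence every update is monotone in `I`, and so is every
composite of updates, which squeezes the image of `I` between the images of `∅` and `P`.
-/

section Up

variable {P : Type*} [PartialOrder P]

theorem isLowerSet_union_singleton_iff {I : Set P} {x : P} (hI : IsLowerSet I) :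
    IsLowerSet (I ∪ {x}) ↔ Set.Iio x ⊆ I := by
  refine ⟨fun h y hyx => ?_, fun h => isLowerSet_iff_Iio_subset.2 ?_⟩
  · exact (h hyx.le (Or.inr rfl)).resolve_right hyx.ne
  · rintro a (ha | rfl)
    · exact (hI.Iio_subset ha).trans Set.subset_union_left
    · exact h.trans Set.subset_union_left

theorem isLowerSet_sdiff_singleton_iff {I : Set P} {x : P} (hI : IsLowerSet I) :
    IsLowerSet (I \ {x}) ↔ ¬ ∃ y ∈ I, x < y := by
  refine ⟨fun h ⟨y, hy, hxy⟩ => ?_, fun h => hI.erase fun y hy hxy => ?_⟩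
  · exact (h hxy.le ⟨hy, hxy.ne'⟩).2 rfl
  · exact (eq_of_le_of_not_lt hxy fun hlt => h ⟨y, hy, hlt⟩).symm

theorem mem_up_true_iff {I : Set P} {x y : P} (hI : IsLowerSet I) :
    y ∈ up I x true ↔ y ∈ I ∨ y = x ∧ Set.Iio x ⊆ I := by
  simp only [up, if_true, isLowerSet_union_singleton_iff hI]
  split_ifs with hx <;> simp [hx, or_comm]

theorem mem_up_false_iff {I : Set P} {x y : P} (hI : IsLowerSet I) :
    y ∈ up I x false ↔ y ∈ I ∧ (y = x → ∃ z ∈ I, x < z) := by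
  simp only [up, Bool.false_eq_true, if_false, isLowerSet_sdiff_singleton_iff hI]
  split_ifs with hx <;> simp [hx]

theorem isLowerSet_up {I : Set P} (hI : IsLowerSet I) (x : P) (b : Bool) :
    IsLowerSet (up I x b) := by
  unfold up
  split_ifs <;> assumption

/-- The single-site update as a self-map of the lattice of lower sets. It takes the site and the
coin toss as one argument, so that a history is a left fold of it over a list. -/
noncomputable def upLowerSet (I : LowerSet P) (p : P × Bool) : LowerSet P :=
  ⟨up I p.1 p.2, isLowerSet_up I.lower p.1 p.2⟩

theorem monotone_upLowerSet (p : P × Bool) : Monotone fun I : LowerSet P => upLowerSet I p := by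
  intro I J hIJ y hy
  obtain ⟨x, _ | _⟩ := p
  · obtain ⟨hyI, hyx⟩ := (mem_up_false_iff I.lower).1 hy
    exact (mem_up_false_iff J.lower).2
      ⟨hIJ hyI, fun h => (hyx h).imp fun z hz => ⟨hIJ hz.1, hz.2⟩⟩
  · exact (mem_up_true_iff J.lower).2 <|
      ((mem_up_true_iff I.lower).1 hy).imp (@hIJ y) fun h => ⟨h.1, h.2.trans hIJ⟩

theorem coe_foldl_upLowerSet (L : List (P × Bool)) (I : LowerSet P) :
    ((L.foldl upLowerSet I : LowerSet P) : Set P) = L.foldl (fun s p => up s p.1 p.2) (I : Set P) :=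
  (List.foldl_hom (fun I : LowerSet P => (I : Set P)) fun _ _ => rfl).symm

end Up

theorem map_eq_map_bot_of_map_bot_eq_map_top {α β : Type*} [Preorder α] [BoundedOrder α]
    [PartialOrder β] {f : α → β} (hf : Monotone f) (h : f ⊥ = f ⊤) (a : α) : f a = f ⊥ :=
  le_antisymm (h ▸ hf le_top) (hf bot_le)

theorem coalescence_general {P : Type*} [PartialOrder P]
    (L : List (P × Bool))
    (F : Set P → Set P)
    (hF : ∀ I : Set P, F I = L.foldl (fun s p => up s p.1 p.2) I)
    (h : F (∅ : Set P) = F (Set.univ : Set P)) :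
    ∀ I : Set P, IsLowerSet I → F I = F (∅ : Set P) := by
  intro I hI
  have hF_coe (J : LowerSet P) : F J = (L.foldl upLowerSet J : LowerSet P) := by
    rw [hF, coe_foldl_upLowerSet]
  have hF_mono : Monotone fun J : LowerSet P => F J := fun J K hJK => by
    simpa only [hF_coe] using
      LowerSet.coe_subset_coe.2 (List.foldl_monotone monotone_upLowerSet L hJK)
  exact map_eq_map_bot_of_map_bot_eq_map_top hF_mono h ⟨I, hI⟩

/-- Coalescence ("squeezing") principle: if the composite of a finite list of
single-site updates sends the empty lower set `∅` and the full lower set `P`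
to the same lower set, then it sends every lower set to that common value. -/
theorem coalescence {P : Type*} [Fintype P] [PartialOrder P]
    (L : List (P × Bool))
    (F : Set P → Set P)
    (hF : ∀ I : Set P, F I = L.foldl (fun s p => up s p.1 p.2) I)
    (h : F (∅ : Set P) = F (Set.univ : Set P)) :
    ∀ I : Set P, IsLowerSet I → F I = F (∅ : Set P) := by
  exact coalescence_general L F hF h
end
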